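/- arXiv:math/0204278 — 4 statements merged into one kernel-verified Lean document; each statement's English description precedes it below -/
import Mathlib

section
/- Let ℓ ≥ 2 be an integer and k = 4ℓ − 4. Define the (k+1)×(k+1) integer matrix Z (rows and columns indexed by λ, μ ∈ {0, 1, …, k}) by Z_{λ,μ} = [λ even]·([λ = μ] + [λ + μ = k]), where [P] is 1 if P holds and 0 otherwise. Then Z is symmetric and Z·Z = 2Z. -/
open Matrix

/-- The coupling matrix of the `D_{2ℓ}` modular invariant of `SU(2)` at level `k = 4ℓ-4`:
`Z_{λ,μ} = [λ even]·([λ = μ] + [λ + μ = k])`. -/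
def ZDeven (k : ℕ) : Matrix (Fin (k + 1)) (Fin (k + 1)) ℤ :=
  Matrix.of fun l m =>
    if Even (l : ℕ) then (if l = m then 1 else 0) + (if (l : ℕ) + (m : ℕ) = k then 1 else 0)
    else 0

/-!
With `P` the projection onto the even weights and `J` the permutation matrix of `λ ↦ k - λ`, the
coupling matrix factors as `Z = P (1 + J)`. For even `k` the reflection preserves parity, so `P` and
`J` commute. Both are symmetric, hence so is `Z`; and `P² = P`, `J² = 1` give
`Z² = P² (1 + J)² = 2 P (1 + J)`.
-/

theorem mul_one_add_mul_self {R : Type*} [Semiring R] {p j : R}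
    (hp : IsIdempotentElem p) (hj : j * j = 1) (hpj : Commute p j) :
    p * (1 + j) * (p * (1 + j)) = 2 • (p * (1 + j)) := by
  have one_add_sq : (1 + j) * (1 + j) = 2 • (1 + j) := by
    rw [mul_add, mul_one, add_mul, one_mul, hj, add_comm j 1, two_smul]
  have hcomm : Commute (1 + j) p := ((Commute.one_right p).add_right hpj).symm
  rw [hcomm.mul_mul_mul_comm, hp.eq, one_add_sq, mul_smul_comm]

theorem isSymm_mul_of_commute {n R : Type*} [Fintype n] [NonUnitalNonAssocCommSemiring R]
    {A B : Matrix n n R} (hA : A.IsSymm) (hB : B.IsSymm) (hAB : Commute A B) : (A * B).IsSymm := by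
  rw [IsSymm, transpose_mul, hA.eq, hB.eq, hAB.eq]

theorem commute_diagonal_permMatrix {n R : Type*} [Fintype n] [DecidableEq n]
    [NonAssocSemiring R] {d : n → R} {σ : Equiv.Perm n} (h : ∀ i, d (σ i) = d i) :
    Commute (diagonal d) (σ.permMatrix R) := by
  ext i j
  rw [diagonal_mul, mul_diagonal, Equiv.Perm.permMatrix, PEquiv.toMatrix_apply]
  by_cases hij : σ i = j <;> simp [Equiv.toPEquiv_apply, hij, ← h i]

/-- The projection `P` onto the even weights of `SU(2)` at level `k`. -/
def evenProj (k : ℕ) : Matrix (Fin (k + 1)) (Fin (k + 1)) ℤ :=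
  diagonal fun l => if Even (l : ℕ) then 1 else 0

/-- The fusion matrix `J` of the simple current of `SU(2)` at level `k`, which acts on weights by
`λ ↦ k - λ`; on `Fin (k + 1)` this reflection is `Fin.rev`. -/
def simpleCurrent (k : ℕ) : Matrix (Fin (k + 1)) (Fin (k + 1)) ℤ :=
  Fin.revPerm.permMatrix ℤ

theorem evenProj_isSymm (k : ℕ) : (evenProj k).IsSymm :=
  isSymm_diagonal _

theorem evenProj_isIdempotentElem (k : ℕ) : IsIdempotentElem (evenProj k) := by
  simp [IsIdempotentElem, evenProj]

theorem simpleCurrent_isSymm (k : ℕ) : (simpleCurrent k).IsSymm := by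
  rw [IsSymm, simpleCurrent, transpose_permMatrix, Equiv.Perm.inv_def, Fin.revPerm_symm]

theorem simpleCurrent_mul_self (k : ℕ) : simpleCurrent k * simpleCurrent k = 1 := by
  have rev_mul_rev : (Fin.revPerm : Equiv.Perm (Fin (k + 1))) * Fin.revPerm = 1 :=
    Equiv.ext Fin.rev_rev
  rw [simpleCurrent, ← permMatrix_mul, rev_mul_rev, permMatrix_one]

theorem even_val_rev_iff {k : ℕ} (hk : Even k) (l : Fin (k + 1)) :
    Even (l.rev : ℕ) ↔ Even (l : ℕ) := by
  rw [Fin.val_rev, Nat.add_sub_add_right, Nat.even_sub l.is_le, iff_true_left hk]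

theorem commute_evenProj_simpleCurrent {k : ℕ} (hk : Even k) :
    Commute (evenProj k) (simpleCurrent k) :=
  commute_diagonal_permMatrix fun l => by
    simp only [Fin.revPerm_apply, even_val_rev_iff hk]

theorem ZDeven_eq_evenProj_mul (k : ℕ) : ZDeven k = evenProj k * (1 + simpleCurrent k) := by
  ext l m
  have add_eq_iff : (l : ℕ) + m = k ↔ l.rev = m := by
    rw [Fin.ext_iff, Fin.val_rev]
    omega
  simp [ZDeven, evenProj, simpleCurrent, one_apply, PEquiv.toMatrix_apply, Equiv.toPEquiv_apply,
    add_eq_iff]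

theorem stmt3_general {k : ℕ} (hk : Even k) :
    (ZDeven k)ᵀ = ZDeven k ∧ ZDeven k * ZDeven k = 2 • ZDeven k := by
  have hPJ : Commute (evenProj k) (simpleCurrent k) := commute_evenProj_simpleCurrent hk
  have hP_one_add : Commute (evenProj k) (1 + simpleCurrent k) :=
    (Commute.one_right _).add_right hPJ
  rw [ZDeven_eq_evenProj_mul]
  constructor
  · exact isSymm_mul_of_commute (evenProj_isSymm k)
      (isSymm_one.add (simpleCurrent_isSymm k)) hP_one_add
  · exact mul_one_add_mul_self (evenProj_isIdempotentElem k) (simpleCurrent_mul_self k) hPJ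

/-- The fusion rule `Z_{D_{2ℓ}}² = 2 Z_{D_{2ℓ}}` of `SU(2)` modular invariants. -/
theorem stmt3 (ℓ : ℕ) (hℓ : 2 ≤ ℓ) :
    (ZDeven (4 * ℓ - 4))ᵀ = ZDeven (4 * ℓ - 4) ∧
      ZDeven (4 * ℓ - 4) * ZDeven (4 * ℓ - 4) = 2 • ZDeven (4 * ℓ - 4) :=
  stmt3_general (((show Even 4 by decide).mul_right ℓ).tsub (by decide))
end

section
/- Let e₀, …, e₁₆ denote the standard basis (column) vectors of ℤ¹⁷, and set a = e₀ + e₁₆, b = e₄ + e₁₂, c = e₆ + e₁₀, d = e₂ + e₁₄. Define Z_{E₇} = a·aᵀ + b·bᵀ + c·cᵀ + e₈·e₈ᵀ + e₈·dᵀ + d·e₈ᵀ and Z_{D₁₀} the 17×17 matrix with entries (Z_{D₁₀})_{λ,μ} = [λ even]·([λ = μ] + [λ + μ = 16]). Then Z_{E₇}·Z_{E₇} = Z_{D₁₀} + Z_{E₇}. -/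
open Matrix

/-- The standard basis vectors of `ℤ¹⁷`. -/
def e17 (j : Fin 17) : Fin 17 → ℤ := fun i => if i = j then 1 else 0

/-- The coupling matrix of the `E₇` modular invariant of `SU(2)` at level 16,
`Z = |χ₀+χ₁₆|² + |χ₄+χ₁₂|² + |χ₆+χ₁₀|² + |χ₈|² + χ₈(χ₂+χ₁₄)* + (χ₂+χ₁₄)χ₈*`. -/
def ZE7 : Matrix (Fin 17) (Fin 17) ℤ :=
  vecMulVec (e17 0 + e17 16) (e17 0 + e17 16) +
    vecMulVec (e17 4 + e17 12) (e17 4 + e17 12) +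
      vecMulVec (e17 6 + e17 10) (e17 6 + e17 10) +
        vecMulVec (e17 8) (e17 8) +
          vecMulVec (e17 8) (e17 2 + e17 14) +
            vecMulVec (e17 2 + e17 14) (e17 8)

/-- The coupling matrix of the `D₁₀` modular invariant of `SU(2)` at level 16:
`(Z_{D₁₀})_{λ,μ} = [λ even]·([λ = μ] + [λ + μ = 16])`. -/
def ZD10 : Matrix (Fin 17) (Fin 17) ℤ :=
  Matrix.of fun l m =>
    if Even (l : ℕ) then (if l = m then 1 else 0) + (if (l : ℕ) + (m : ℕ) = 16 then 1 else 0)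
    else 0

/-!
The simple current `λ ↦ 16 - λ` splits the even weights into the orbits of `0, 2, 4, 6` and the
fixed point `8`. In terms of the mutually orthogonal orbit vectors `uⱼ = eⱼ + e₁₆₋ⱼ`, of squared
length `2`, and the unit vector `e₈`, the matrix `Z_{E₇}` is a sum `F + C` of the frame operator
`F` of `u₀, u₄, u₆` and `C = e₈ e₈ᵀ + e₈ u₂ᵀ + u₂ e₈ᵀ`, which act on orthogonal subspaces. Hence
`Z_{E₇}² = F² + C² = 2 F + (u₂ u₂ᵀ + 2 e₈ e₈ᵀ + C)`, while `Z_{D₁₀} = F + u₂ u₂ᵀ + 2 e₈ e₈ᵀ`.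
-/

section RankOne

variable {ι n R : Type*} [CommSemiring R]

/-- The frame operator `∑ vᵢ vᵢᵀ` of the vectors `v i`, `i ∈ s`: the coupling matrix of the diagonal
form `∑ |vᵢ|²`. -/
def frameMatrix (s : Finset ι) (v : ι → n → R) : Matrix n n R :=
  ∑ i ∈ s, vecMulVec (v i) (v i)

/-- The coupling matrix of the form `|e|² + e d* + d e*`, which is the part of a modular invariant
where a character `e` is coupled to itself and to `d`, while `d` is not coupled to itself. -/
def couplingBlock (e d : n → R) : Matrix n n R :=
  vecMulVec e e + vecMulVec e d + vecMulVec d e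

theorem isSymm_frameMatrix (s : Finset ι) (v : ι → n → R) : (frameMatrix s v).IsSymm := by
  simp only [IsSymm, frameMatrix, transpose_sum, transpose_vecMulVec]

theorem isSymm_couplingBlock (e d : n → R) : (couplingBlock e d).IsSymm := by
  simp only [IsSymm, couplingBlock, transpose_add, transpose_vecMulVec]
  exact add_right_comm _ _ _

variable [Fintype n]

theorem frameMatrix_mulVec (s : Finset ι) (v : ι → n → R) (w : n → R) :
    frameMatrix s v *ᵥ w = ∑ i ∈ s, (v i ⬝ᵥ w) • v i := by
  simp only [frameMatrix, sum_mulVec, vecMulVec_mulVec, op_smul_eq_smul]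

theorem frameMatrix_mulVec_eq_zero {s : Finset ι} {v : ι → n → R} {w : n → R}
    (h : ∀ i ∈ s, v i ⬝ᵥ w = 0) : frameMatrix s v *ᵥ w = 0 := by
  rw [frameMatrix_mulVec]
  exact Finset.sum_eq_zero fun i hi => by rw [h i hi, zero_smul]

theorem frameMatrix_mulVec_of_mem {s : Finset ι} {v : ι → n → R}
    (horth : (s : Set ι).Pairwise fun i j => v i ⬝ᵥ v j = 0) {j : ι} (hj : j ∈ s) :
    frameMatrix s v *ᵥ v j = (v j ⬝ᵥ v j) • v j := by
  rw [frameMatrix_mulVec]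
  exact Finset.sum_eq_single_of_mem j hj fun i hi hij => by rw [horth hi hj hij, zero_smul]

theorem frameMatrix_mul_self {s : Finset ι} {v : ι → n → R} {c : R}
    (horth : (s : Set ι).Pairwise fun i j => v i ⬝ᵥ v j = 0) (hself : ∀ i ∈ s, v i ⬝ᵥ v i = c) :
    frameMatrix s v * frameMatrix s v = c • frameMatrix s v :=
  calc frameMatrix s v * frameMatrix s v
      = ∑ j ∈ s, vecMulVec (frameMatrix s v *ᵥ v j) (v j) := by
        simp only [frameMatrix, Finset.mul_sum, mul_vecMulVec]
    _ = ∑ j ∈ s, c • vecMulVec (v j) (v j) :=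
        Finset.sum_congr rfl fun j hj => by
          rw [frameMatrix_mulVec_of_mem horth hj, hself j hj, smul_vecMulVec]
    _ = c • frameMatrix s v := Finset.smul_sum.symm

theorem mul_couplingBlock_eq_zero {m : Type*} {A : Matrix m n R} {e d : n → R}
    (he : A *ᵥ e = 0) (hd : A *ᵥ d = 0) : A * couplingBlock e d = 0 := by
  simp only [couplingBlock, Matrix.mul_add, mul_vecMulVec, he, hd, zero_vecMulVec, add_zero]

theorem couplingBlock_mul_self {e d : n → R} (hee : e ⬝ᵥ e = 1) (hed : e ⬝ᵥ d = 0) :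
    couplingBlock e d * couplingBlock e d =
      vecMulVec d d + (d ⬝ᵥ d) • vecMulVec e e + couplingBlock e d := by
  have hde : d ⬝ᵥ e = 0 := by rw [dotProduct_comm, hed]
  simp only [couplingBlock, add_mul, mul_add, vecMulVec_mul_vecMulVec, hee, hed, hde, one_smul,
    zero_smul, vecMulVec_zero, vecMulVec_smul]
  abel

theorem frameMatrix_add_couplingBlock_mul_self {s : Finset ι} {v : ι → n → R} {e d : n → R} {c : R}
    (horth : (s : Set ι).Pairwise fun i j => v i ⬝ᵥ v j = 0) (hself : ∀ i ∈ s, v i ⬝ᵥ v i = c)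
    (hve : ∀ i ∈ s, v i ⬝ᵥ e = 0) (hvd : ∀ i ∈ s, v i ⬝ᵥ d = 0)
    (hee : e ⬝ᵥ e = 1) (hed : e ⬝ᵥ d = 0) :
    (frameMatrix s v + couplingBlock e d) * (frameMatrix s v + couplingBlock e d) =
      c • frameMatrix s v + (vecMulVec d d + (d ⬝ᵥ d) • vecMulVec e e + couplingBlock e d) := by
  have hFC : frameMatrix s v * couplingBlock e d = 0 :=
    mul_couplingBlock_eq_zero (frameMatrix_mulVec_eq_zero hve) (frameMatrix_mulVec_eq_zero hvd)
  have hCF : couplingBlock e d * frameMatrix s v = 0 := by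
    simpa only [transpose_mul, (isSymm_frameMatrix s v).eq, (isSymm_couplingBlock e d).eq,
      transpose_zero] using congrArg transpose hFC
  rw [add_mul, mul_add, mul_add, hFC, hCF, add_zero, zero_add, frameMatrix_mul_self horth hself,
    couplingBlock_mul_self hee hed]

end RankOne

/-- The sum of the basis vectors over the orbit of `j` under the simple current `j ↦ 16 - j`, which
is `Fin.rev` on `Fin 17`. The fixed point `8` is counted twice. -/
def orbitVector (j : Fin 17) : Fin 17 → ℤ := e17 j + e17 j.rev

/-- Representatives of the orbits of the simple current on which both `ZE7` and `ZD10` are the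
diagonal form `|χⱼ + χ₁₆₋ⱼ|²`. -/
def diagonalOrbits : Finset (Fin 17) := {0, 4, 6}

theorem e17_eq_single (j : Fin 17) : e17 j = Pi.single j 1 := by
  ext i
  simp only [e17, Pi.single_apply]

theorem e17_dotProduct_e17 (i j : Fin 17) : e17 i ⬝ᵥ e17 j = if i = j then 1 else 0 := by
  rw [e17_eq_single i, single_one_dotProduct, e17]

theorem e17_dotProduct_orbitVector (i j : Fin 17) :
    e17 i ⬝ᵥ orbitVector j = (if i = j then 1 else 0) + if i = j.rev then 1 else 0 := by
  rw [orbitVector, dotProduct_add, e17_dotProduct_e17, e17_dotProduct_e17]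

theorem orbitVector_dotProduct_orbitVector (i j : Fin 17) :
    orbitVector i ⬝ᵥ orbitVector j =
      2 * ((if i = j then 1 else 0) + if i = j.rev then 1 else 0) := by
  rw [orbitVector, add_dotProduct, e17_dotProduct_orbitVector, e17_dotProduct_orbitVector]
  simp only [Fin.rev_eq_iff, Fin.rev_rev]
  ring

theorem vecMulVec_orbitVector_self (j : Fin 17) :
    vecMulVec (orbitVector j) (orbitVector j) =
      vecMulVec (e17 j) (orbitVector j) + vecMulVec (e17 j.rev) (orbitVector j.rev) := by
  have h : orbitVector j.rev = orbitVector j := by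
    rw [orbitVector, Fin.rev_rev, add_comm, orbitVector]
  rw [h, ← add_vecMulVec, ← orbitVector]

theorem vecMulVec_e17_orbitVector_eight :
    vecMulVec (e17 8) (orbitVector 8) = (2 : ℤ) • vecMulVec (e17 8) (e17 8) := by
  have h : orbitVector 8 = (2 : ℤ) • e17 8 := (two_smul ℤ (e17 8)).symm
  rw [h, vecMulVec_smul]

theorem ZD10_eq_sum_even :
    ZD10 = ∑ j : Fin 17 with Even j.val, vecMulVec (e17 j) (orbitVector j) := by
  ext l m
  have hrev : m = l.rev ↔ (l : ℕ) + m = 16 := by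
    rw [Fin.ext_iff, Fin.val_rev]
    omega
  simp [ZD10, Matrix.sum_apply, vecMulVec_apply, orbitVector, e17, hrev, eq_comm]

theorem frameMatrix_diagonalOrbits {n R : Type*} [CommSemiring R] (v : Fin 17 → n → R) :
    frameMatrix diagonalOrbits v =
      vecMulVec (v 0) (v 0) + vecMulVec (v 4) (v 4) + vecMulVec (v 6) (v 6) := by
  simp [frameMatrix, diagonalOrbits, add_assoc]

theorem ZD10_eq_frameMatrix_add :
    ZD10 = frameMatrix diagonalOrbits orbitVector +
      (vecMulVec (orbitVector 2) (orbitVector 2) + (2 : ℤ) • vecMulVec (e17 8) (e17 8)) := by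
  have heven : (Finset.univ.filter fun j : Fin 17 => Even j.val) =
      {0, 16, 4, 12, 6, 10, 2, 14, 8} := by decide
  rw [ZD10_eq_sum_even, heven, frameMatrix_diagonalOrbits, ← vecMulVec_e17_orbitVector_eight]
  simp [vecMulVec_orbitVector_self, add_assoc]

theorem ZE7_eq_frameMatrix_add_couplingBlock :
    ZE7 = frameMatrix diagonalOrbits orbitVector + couplingBlock (e17 8) (orbitVector 2) := by
  rw [frameMatrix_diagonalOrbits]
  simp [couplingBlock, ZE7, orbitVector, add_assoc]

/-- The fusion rule `Z_{E₇}² = Z_{D₁₀} + Z_{E₇}` of `SU(2)` modular invariants at level 16. -/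
theorem stmt6 : ZE7 * ZE7 = ZD10 + ZE7 := by
  have horth : (diagonalOrbits : Set (Fin 17)).Pairwise fun i j =>
      orbitVector i ⬝ᵥ orbitVector j = 0 := by
    simp only [Set.Pairwise, Finset.mem_coe, orbitVector_dotProduct_orbitVector]
    decide
  have hself : ∀ i ∈ diagonalOrbits, orbitVector i ⬝ᵥ orbitVector i = 2 := by
    simp only [orbitVector_dotProduct_orbitVector]
    decide
  have hve : ∀ i ∈ diagonalOrbits, orbitVector i ⬝ᵥ e17 8 = 0 := by
    simp only [dotProduct_comm _ (e17 8), e17_dotProduct_orbitVector]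
    decide
  have hvd : ∀ i ∈ diagonalOrbits, orbitVector i ⬝ᵥ orbitVector 2 = 0 := by
    simp only [orbitVector_dotProduct_orbitVector]
    decide
  have hee : e17 8 ⬝ᵥ e17 8 = 1 := e17_dotProduct_e17 8 8
  have hed : e17 8 ⬝ᵥ orbitVector 2 = 0 := e17_dotProduct_orbitVector 8 2
  have hdd : orbitVector 2 ⬝ᵥ orbitVector 2 = 2 := orbitVector_dotProduct_orbitVector 2 2
  rw [ZD10_eq_frameMatrix_add, ZE7_eq_frameMatrix_add_couplingBlock,
    frameMatrix_add_couplingBlock_mul_self horth hself hve hvd hee hed, hdd, two_smul]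
  abel
end

section
/- Let e₀, …, e₁₆ denote the standard basis (column) vectors of ℤ¹⁷, and set a = e₀ + e₁₆, b = e₄ + e₁₂, c = e₆ + e₁₀, d = e₂ + e₁₄. Define Z_{E₇} = a·aᵀ + b·bᵀ + c·cᵀ + e₈·e₈ᵀ + e₈·dᵀ + d·e₈ᵀ and Z_{D₁₀} the 17×17 matrix with entries (Z_{D₁₀})_{λ,μ} = [λ even]·([λ = μ] + [λ + μ = 16]). Then Z_{D₁₀}·Z_{E₇} = Z_{E₇}·Z_{D₁₀} = 2·Z_{E₇}. -/
open Matrix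

theorem isSymm_ZD10 : ZD10.IsSymm := by
  refine IsSymm.ext fun l m => ?_
  simp only [ZD10, of_apply]
  grind

theorem isSymm_ZE7 : ZE7.IsSymm := by
  simp only [IsSymm, ZE7, transpose_add, transpose_vecMulVec]
  abel

section Eigenvectors

variable {j k : Fin 17}

theorem ZD10_mulVec_e17 (hj : Even (j : ℕ)) (hjk : (j : ℕ) + k = 16) :
    ZD10 *ᵥ e17 j = e17 j + e17 k := by
  ext i
  rw [e17_eq_single, mulVec_single_one]
  simp only [ZD10, col_apply, of_apply, Pi.add_apply, e17, Pi.single_apply]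
  grind

theorem ZD10_mulVec_e17_add_e17 (hj : Even (j : ℕ)) (hjk : (j : ℕ) + k = 16) :
    ZD10 *ᵥ (e17 j + e17 k) = 2 • (e17 j + e17 k) := by
  have hk : Even (k : ℕ) := by grind
  have hkj : (k : ℕ) + j = 16 := by lia
  rw [mulVec_add, ZD10_mulVec_e17 hj hjk, ZD10_mulVec_e17 hk hkj, add_comm (e17 k), two_smul]

end Eigenvectors

theorem ZD10_mul_ZE7 : ZD10 * ZE7 = 2 • ZE7 := by
  have ha : ZD10 *ᵥ (e17 0 + e17 16) = 2 • (e17 0 + e17 16) :=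
    ZD10_mulVec_e17_add_e17 (by decide) rfl
  have hb : ZD10 *ᵥ (e17 4 + e17 12) = 2 • (e17 4 + e17 12) :=
    ZD10_mulVec_e17_add_e17 (by decide) rfl
  have hc : ZD10 *ᵥ (e17 6 + e17 10) = 2 • (e17 6 + e17 10) :=
    ZD10_mulVec_e17_add_e17 (by decide) rfl
  have hd : ZD10 *ᵥ (e17 2 + e17 14) = 2 • (e17 2 + e17 14) :=
    ZD10_mulVec_e17_add_e17 (by decide) rfl
  have he : ZD10 *ᵥ e17 8 = 2 • e17 8 := by
    rw [ZD10_mulVec_e17 (k := 8) (by decide) rfl, two_smul]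
  simp only [ZE7, Matrix.mul_add, mul_vecMulVec, ha, hb, hc, hd, he, smul_vecMulVec]
  simp only [smul_add]

/-- The fusion rule `Z_{D₁₀}Z_{E₇} = Z_{E₇}Z_{D₁₀} = 2Z_{E₇}` of `SU(2)` modular invariants at level 16. -/
theorem stmt7 : ZD10 * ZE7 = ZE7 * ZD10 ∧ ZE7 * ZD10 = 2 • ZE7 := by
  have hsymm : (ZD10 * ZE7).IsSymm := ZD10_mul_ZE7 ▸ isSymm_ZE7.smul 2
  have hcomm : Commute ZD10 ZE7 := by
    rw [IsHermitian.commute_iff (isHermitian_iff_isSymm.mpr isSymm_ZD10)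
      (isHermitian_iff_isSymm.mpr isSymm_ZE7)]
    exact isHermitian_iff_isSymm.mpr hsymm
  exact ⟨hcomm.eq, hcomm.eq.symm.trans ZD10_mul_ZE7⟩
end

section
/- Let I be a finite set, let P and Q be disjoint subsets of I with |P| = 36 and |Q| = 28, and let f ∈ P. Let u, w ∈ ℤ^I be the indicator (column) vectors of P and Q respectively, and e = e_f the standard basis vector at f. Define the I×I integer matrices Z₁ = u·uᵀ + 32·e·eᵀ + w·wᵀ and Z_s = (u + 4e)·(u + 4e)ᵀ. Then Z₁·Z₁ = 28·Z₁ + 8·Z_s. -/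
open Matrix

/-! Since `Q` is disjoint from `P`, the matrix `w·wᵀ` is annihilated on both sides by
`A = u·uᵀ + k·e·eᵀ`, so `Z₁² = A² + |Q|·w·wᵀ`, and it remains to solve
`A² = |Q|·A + c·(u + te)·(u + te)ᵀ`. Comparing the coefficients of `u·uᵀ`, of `u·eᵀ + e·uᵀ` and of
`e·eᵀ` gives `|P| = |Q| + c`, `k = ct` and `k² = |Q|k + ct²`, the last of which follows from
`|Q| + t = ct`. The modular invariants are the case `|Q| = 28`, `c = 8`, `t = 4`, `k = 32`. -/

theorem add_mul_self_of_mul_eq_zero {R : Type*} [NonUnitalNonAssocSemiring R] {a b : R}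
    (hab : a * b = 0) (hba : b * a = 0) : (a + b) * (a + b) = a * a + b * b := by
  rw [add_mul, mul_add, mul_add, hab, hba, add_zero, zero_add]

theorem dotProduct_ite_mem_ite_mem {I R : Type*} [Fintype I] [DecidableEq I] [NonAssocSemiring R]
    (S T : Finset I) :
    (fun i => if i ∈ S then (1 : R) else 0) ⬝ᵥ (fun i => if i ∈ T then 1 else 0) =
      (S ∩ T).card := by
  simp [dotProduct, ← ite_and, ← Finset.mem_inter, Finset.inter_comm]

section VecMulVec

variable {I R : Type*} [CommSemiring R]

theorem vecMulVec_add_smul_self (u e : I → R) (t : R) :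
    vecMulVec (u + t • e) (u + t • e) =
      vecMulVec u u + t • (vecMulVec u e + vecMulVec e u) + (t * t) • vecMulVec e e := by
  simp only [add_vecMulVec, vecMulVec_add, smul_vecMulVec, vecMulVec_smul]
  module

variable [Fintype I]

theorem mul_self_vecMulVec_self_add_smul (u e : I → R) (k : R) :
    (vecMulVec u u + k • vecMulVec e e) * (vecMulVec u u + k • vecMulVec e e) =
      (u ⬝ᵥ u) • vecMulVec u u + (k * (u ⬝ᵥ e)) • (vecMulVec u e + vecMulVec e u) +
        (k * k * (e ⬝ᵥ e)) • vecMulVec e e := by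
  simp only [add_mul, mul_add, smul_mul_assoc, mul_smul_comm, vecMulVec_mul_vecMulVec,
    vecMulVec_smul, dotProduct_comm e u]
  module

theorem mul_self_vecMulVec_self_add_smul_of_add_eq_mul {u e : I → R} {b c t : R}
    (huu : u ⬝ᵥ u = b + c) (hue : u ⬝ᵥ e = 1) (hee : e ⬝ᵥ e = 1) (hbct : b + t = c * t) :
    (vecMulVec u u + (c * t) • vecMulVec e e) * (vecMulVec u u + (c * t) • vecMulVec e e) =
      b • (vecMulVec u u + (c * t) • vecMulVec e e) + c • vecMulVec (u + t • e) (u + t • e) := by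
  have corner : c * t * (c * t) = b * (c * t) + c * (t * t) := by
    calc c * t * (c * t) = c * t * (b + t) := by rw [hbct]
      _ = b * (c * t) + c * (t * t) := by ring
  rw [mul_self_vecMulVec_self_add_smul, vecMulVec_add_smul_self, huu, hue, hee, mul_one,
    mul_one, corner]
  module

theorem vecMulVec_self_add_smul_mul_vecMulVec_eq_zero {u e w : I → R}
    (huw : u ⬝ᵥ w = 0) (hew : e ⬝ᵥ w = 0) (k : R) (x : I → R) :
    (vecMulVec u u + k • vecMulVec e e) * vecMulVec w x = 0 := by
  simp only [add_mul, smul_mul_assoc, vecMulVec_mul_vecMulVec, huw, hew, zero_smul,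
    vecMulVec_zero, smul_zero, add_zero]

theorem vecMulVec_mul_vecMulVec_self_add_smul_eq_zero {u e w : I → R}
    (huw : u ⬝ᵥ w = 0) (hew : e ⬝ᵥ w = 0) (k : R) (x : I → R) :
    vecMulVec x w * (vecMulVec u u + k • vecMulVec e e) = 0 := by
  simp only [mul_add, mul_smul_comm, vecMulVec_mul_vecMulVec, dotProduct_comm w, huw, hew,
    zero_smul, vecMulVec_zero, smul_zero, add_zero]

theorem stmt11_general [DecidableEq I] {P Q : Finset I} (hPQ : Disjoint P Q) {c t : R}
    (hP : (P.card : R) = Q.card + c) (hQ : Q.card + t = c * t) {f : I} (hf : f ∈ P) :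
    let u : I → R := fun i => if i ∈ P then 1 else 0
    let w : I → R := fun i => if i ∈ Q then 1 else 0
    let e : I → R := fun i => if i = f then 1 else 0
    let Z1 : Matrix I I R := vecMulVec u u + (c * t) • vecMulVec e e + vecMulVec w w
    let Zs : Matrix I I R := vecMulVec (u + t • e) (u + t • e)
    Z1 * Z1 = (Q.card : R) • Z1 + c • Zs := by
  intro u w e Z1 Zs
  have hfQ : f ∉ Q := Finset.disjoint_left.mp hPQ hf
  have huu : u ⬝ᵥ u = Q.card + c := by rw [dotProduct_ite_mem_ite_mem, Finset.inter_self, hP]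
  have hww : w ⬝ᵥ w = Q.card := by rw [dotProduct_ite_mem_ite_mem, Finset.inter_self]
  have huw : u ⬝ᵥ w = 0 := by
    rw [dotProduct_ite_mem_ite_mem, Finset.disjoint_iff_inter_eq_empty.mp hPQ, Finset.card_empty,
      Nat.cast_zero]
  have hue : u ⬝ᵥ e = 1 := by simp [u, e, dotProduct, hf]
  have hee : e ⬝ᵥ e = 1 := by simp [e, dotProduct]
  have hew : e ⬝ᵥ w = 0 := by simp [e, w, dotProduct, hfQ]
  let A : Matrix I I R := vecMulVec u u + (c * t) • vecMulVec e e
  calc Z1 * Z1 = A * A + vecMulVec w w * vecMulVec w w :=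
        add_mul_self_of_mul_eq_zero
          (vecMulVec_self_add_smul_mul_vecMulVec_eq_zero huw hew _ _)
          (vecMulVec_mul_vecMulVec_self_add_smul_eq_zero huw hew _ _)
    _ = ((Q.card : R) • A + c • Zs) + (Q.card : R) • vecMulVec w w := by
        rw [mul_self_vecMulVec_self_add_smul_of_add_eq_mul huu hue hee hQ,
          vecMulVec_mul_vecMulVec, hww, vecMulVec_smul]
    _ = (Q.card : R) • Z1 + c • Zs := by rw [add_right_comm, ← smul_add]

end VecMulVec

/-- The multiplication rule `Z₁·Z₁ = 28·Z₁ + 8·Z_s` for the two `SU(7)₇` modular invariants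
obtained by restricting the `SO(48)₁` invariants through `SU(7)₇ ⊂ SO(48)₁`. -/
theorem stmt11 {I : Type*} [Fintype I] [DecidableEq I]
    (P Q : Finset I) (hPQ : Disjoint P Q) (hP : P.card = 36) (hQ : Q.card = 28)
    (f : I) (hf : f ∈ P) :
    let u : I → ℤ := fun i => if i ∈ P then 1 else 0
    let w : I → ℤ := fun i => if i ∈ Q then 1 else 0
    let e : I → ℤ := fun i => if i = f then 1 else 0
    let Z1 : Matrix I I ℤ := vecMulVec u u + (32 : ℤ) • vecMulVec e e + vecMulVec w w
    let Zs : Matrix I I ℤ := vecMulVec (u + 4 • e) (u + 4 • e)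
    Z1 * Z1 = 28 • Z1 + 8 • Zs := by
  simpa [hP, hQ, ofNat_smul_eq_nsmul] using
    stmt11_general (R := ℤ) hPQ (c := 8) (t := 4) (by simp [hP, hQ]) (by simp [hQ]) hf
end
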